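/- There exists a constant c > 0 such that the following holds for every prime power N ≥ 2 and every integer k ≥ 2: setting d = ⌈c · k^{3/2} · 2^{k/2} · √(N / log₂ N)⌉, A = T_{N,d,k} : M_d^{k−1} → F_N ≅ [N], and f = Lift(A), one has D_k(f) ≥ log₂ N. -/

import Mathlib

/-- Transcript of `c` bits, each bit determined from the previous transcript. -/
def buildTranscript (step : List Bool → Bool) : ℕ → List Bool
  | 0 => []
  | m + 1 => buildTranscript step m ++ [step (buildTranscript step m)]

/-- A deterministic number-on-the-forehead style protocol with `k` players on input
space `I`, where `Vis i x x'` means player `i` cannot distinguish the inputs `x` and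
`x'` (player `i` sees everything except their own input).  The protocol runs for
exactly `c` rounds; in each round a speaker, determined by the transcript so far,
writes one bit on the blackboard, and this bit may depend only on the part of the
input that the speaker sees.  The output is determined by the full transcript. -/
structure DProt (k : ℕ) (I : Type) (Vis : Fin k → I → I → Prop) (Y : Type) (c : ℕ) where
  speaker : List Bool → Fin k
  msg : List Bool → I → Bool
  msg_nof : ∀ t x x', Vis (speaker t) x x' → msg t x = msg t x'
  out : List Bool → Y

def DProt.run {k I Vis Y c} (P : DProt k I Vis Y c) (x : I) : Y :=
  P.out (buildTranscript (fun t => P.msg t x) c)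

/-- Deterministic NOF communication complexity of `f` restricted to `S`. -/
noncomputable def DCC {k : ℕ} {I Y : Type} (Vis : Fin k → I → I → Prop)
    (f : I → Y) (S : Set I) : ℕ :=
  sInf { c | ∃ P : DProt k I Vis Y c, ∀ x ∈ S, P.run x = f x }

/-- A nondeterministic protocol: a prover first provides a proof string of `a` bits,
after which the players communicate `c` bits as in a deterministic protocol (the bits
may depend on the proof). -/
structure NProt (k : ℕ) (I : Type) (Vis : Fin k → I → I → Prop) (Y : Type) (a c : ℕ) where
  speaker : (Fin a → Bool) → List Bool → Fin k
  msg : (Fin a → Bool) → List Bool → I → Bool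
  msg_nof : ∀ p t x x', Vis (speaker p t) x x' → msg p t x = msg p t x'
  out : (Fin a → Bool) → List Bool → Y

def NProt.run {k I Vis Y a c} (P : NProt k I Vis Y a c) (p : Fin a → Bool) (x : I) : Y :=
  P.out p (buildTranscript (fun t => P.msg p t x) c)

/-- Nondeterministic NOF complexity `N_k(A, S)` of the search problem for `A : I → Y`
restricted to `S`: minimum cost (proof length plus communication) of a protocol which
on every input outputs either a value in `Y` or `none` (i.e. "don't know"), never
outputs a wrong value on inputs in `S`, and on every input of `S` has at least one
proof leading to the correct value. -/
noncomputable def NCC {k : ℕ} {I Y : Type} (Vis : Fin k → I → I → Prop)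
    (A : I → Y) (S : Set I) : ℕ :=
  sInf { m | ∃ a c, m = a + c ∧ ∃ P : NProt k I Vis (Option Y) a c,
    ∀ x ∈ S, (∀ p, P.run p x = none ∨ P.run p x = some (A x)) ∧
      ∃ p, P.run p x = some (A x) }

/-- Nondeterministic NOF complexity `N¹_k(f)` of a boolean function `f`: on every
1-input some proof leads to output `true`, and on every 0-input all proofs lead to
output `false`.  The cost is proof length plus communication. -/
noncomputable def NCCbool {k : ℕ} {I : Type} (Vis : Fin k → I → I → Prop)
    (f : I → Bool) : ℕ :=
  sInf { m | ∃ a c, m = a + c ∧ ∃ P : NProt k I Vis Bool a c,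
    ∀ x, f x = true ↔ ∃ p, P.run p x = true }

/-- Deterministic NOF communication complexity with `b` help bits:
`min` over `t ≤ b` and partitions of the input space into `2 ^ t` parts (given by a
coloring `H`) of `t` plus the maximal complexity of a part. -/
noncomputable def DHelp {k : ℕ} {I Y : Type} (Vis : Fin k → I → I → Prop)
    (A : I → Y) (b : ℕ) : ℕ :=
  sInf { m | ∃ t ≤ b, ∃ H : I → Fin (2 ^ t),
    m = t + Finset.univ.sup fun i => DCC Vis A (H ⁻¹' {i}) }

/-- Nondeterministic NOF communication complexity with `b` help bits. -/
noncomputable def NHelp {k : ℕ} {I Y : Type} (Vis : Fin k → I → I → Prop)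
    (A : I → Y) (b : ℕ) : ℕ :=
  sInf { m | ∃ t ≤ b, ∃ H : I → Fin (2 ^ t),
    m = t + Finset.univ.sup fun i => NCC Vis A (H ⁻¹' {i}) }

/-- A one-way protocol: player `last` first sends a message of `a` bits (depending
only on what they see), after which the remaining players communicate `c` more bits
without the participation of player `last`. -/
structure OWProt (k : ℕ) (I : Type) (Vis : Fin k → I → I → Prop) (Y : Type)
    (last : Fin k) (a c : ℕ) where
  pre : I → Fin a → Bool
  pre_nof : ∀ x x', Vis last x x' → pre x = pre x'
  speaker : (Fin a → Bool) → List Bool → Fin k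
  speaker_ne : ∀ p t, speaker p t ≠ last
  msg : (Fin a → Bool) → List Bool → I → Bool
  msg_nof : ∀ p t x x', Vis (speaker p t) x x' → msg p t x = msg p t x'
  out : (Fin a → Bool) → List Bool → Y

def OWProt.run {k I Vis Y last a c} (P : OWProt k I Vis Y last a c) (x : I) : Y :=
  P.out (P.pre x) (buildTranscript (fun t => P.msg (P.pre x) t x) c)

/-- One-way NOF communication complexity `D¹_k(f)`, where player `last` speaks first
(a single message) and then the other players communicate. -/
noncomputable def OWCC {k : ℕ} {I Y : Type} (Vis : Fin k → I → I → Prop)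
    (f : I → Y) (last : Fin k) : ℕ :=
  sInf { m | ∃ a c, m = a + c ∧ ∃ P : OWProt k I Vis Y last a c, ∀ x, P.run x = f x }

/-- Standard NOF visibility: player `i` sees all coordinates except the `i`-th one. -/
def nofVis (k : ℕ) (W : Type) : Fin k → (Fin k → W) → (Fin k → W) → Prop :=
  fun i x x' => ∀ j, j ≠ i → x j = x' j

/-- NOF visibility for `k` players on inputs in `(Fin (k-1) → W) × Z`: players
`0, …, k-2` hold the coordinates of the first component on their foreheads, and the
`k`-th player (index `k-1`) holds the second component. -/
def liftVis (k : ℕ) (W Z : Type) :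
    Fin k → ((Fin (k - 1) → W) × Z) → ((Fin (k - 1) → W) × Z) → Prop :=
  fun i z z' => (∀ j : Fin (k - 1), (j : ℕ) ≠ (i : ℕ) → z.1 j = z'.1 j) ∧
    ((i : ℕ) = k - 1 ∨ z.2 = z'.2)

/-- `C` is a cylinder in coordinate `i`: membership does not depend on coordinate `i`. -/
def IsCylinder (k : ℕ) (W : Type) (i : Fin k) (C : Set (Fin k → W)) : Prop :=
  ∀ x x', (∀ j, j ≠ i → x j = x' j) → (x ∈ C ↔ x' ∈ C)

/-- `C` is a cylinder intersection: an intersection of cylinders, one per coordinate. -/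
def IsCylinderIntersection (k : ℕ) (W : Type) (C : Set (Fin k → W)) : Prop :=
  ∃ Cs : Fin k → Set (Fin k → W), (∀ i, IsCylinder k W i (Cs i)) ∧ C = ⋂ i, Cs i

/-- `disc(A, S, y) = | |A⁻¹(y) ∩ S| - |S| / N | / |X|` where `N` is the number of
colors and `X` is the input space. -/
noncomputable def discVal (k : ℕ) (W Y : Type) (A : (Fin k → W) → Y)
    (S : Set (Fin k → W)) (y : Y) : ℝ :=
  |(Nat.card ↥(A ⁻¹' {y} ∩ S) : ℝ) - (Nat.card ↥S : ℝ) / (Nat.card Y : ℝ)| /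
    (Nat.card (Fin k → W) : ℝ)

/-- Multicolor discrepancy of `A`: the supremum of `disc(A, S, y)` over all cylinder
intersections `S` and all colors `y`. -/
noncomputable def multiDisc (k : ℕ) (W Y : Type) (A : (Fin k → W) → Y) : ℝ :=
  sSup { d : ℝ | ∃ S y, IsCylinderIntersection k W S ∧ d = discVal k W Y A S y }

/-!
Let `N` be the number of values of `A` and fix a leaf `t` of a protocol for the graph of `A`. For
each value `y`, the inputs `x` for which the first `k - 1` players on `(x, y)` follow `t` form a
cylinder intersection `C y`. If `(x, A x)` reaches `t`, then `x` lies in `C (A x)` and in no other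
`C y`: the last player cannot distinguish `(x, A x)` from `(x, y)`, so `(x, y)` would reach `t` and
be accepted as well. The sets `C y \ ⋃ y' ≠ y, C y'` are disjoint, and by inclusion–exclusion each
has discrepancy at most `2 ^ N` times that of `A`. If this is small, then only about a fraction
`1 / N` of each of these sets has the value `y`, so about `N` leaves are needed.

For the trace of a product, discrepancy is bounded by character sums over cylinder intersections.
Each application of the Cauchy–Schwarz inequality removes one cylinder and replaces a matrix by the
difference of two independent copies, which is again uniform. What remains is the probability that
`X₁ * ⋯ * Xₙ = 0` for random matrices. By Sylvester's inequality the rank drops by at most `s` per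
factor of corank at most `s`, and a corank above `s` has probability at most `N ^ (-s * (s + 1))`.
-/

section

open Finset
open scoped BigOperators ComplexConjugate

section Expectation

variable {ι U V : Type*} [Fintype ι] [Fintype U] [Fintype V]

lemma pow_expect_le_expect_pow [Nonempty ι] {f : ι → ℝ} (hf : ∀ i, 0 ≤ f i) (n : ℕ) :
    (𝔼 i, f i) ^ n ≤ 𝔼 i, f i ^ n := by
  simpa [Fintype.expect_eq_sum_div_card, div_eq_inv_mul, mul_sum] using
    Real.pow_arith_mean_le_arith_mean_pow univ (fun _ ↦ (Fintype.card ι : ℝ)⁻¹) f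
      (fun _ _ ↦ by positivity) (by simp) (fun i _ ↦ hf i) n

lemma expect_fin_cons {M : Type*} [AddCommMonoid M] [Module ℚ≥0 M] {n : ℕ}
    (f : (Fin (n + 1) → U) → M) :
    𝔼 x, f x = 𝔼 u, 𝔼 v : Fin n → U, f (Fin.cons u v) := by
  rw [← expect_product', univ_product_univ]
  exact (Fintype.expect_equiv (Fin.consEquiv fun _ ↦ U) _ _ fun _ ↦ rfl).symm

lemma ofReal_expect_norm_sq_expect (g : U → V → ℂ) :
    ((𝔼 v, ‖𝔼 u, g u v‖ ^ 2 : ℝ) : ℂ) = 𝔼 u, 𝔼 u', 𝔼 v, g u v * conj (g u' v) := by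
  have norm_sq_eq (v : V) : ((‖𝔼 u, g u v‖ ^ 2 : ℝ) : ℂ) = 𝔼 u, 𝔼 u', g u v * conj (g u' v) := by
    rw [Complex.ofReal_pow, ← Complex.mul_conj', map_expect, expect_mul_expect]
  simp only [Complex.ofReal_expect, norm_sq_eq]
  rw [expect_comm]
  exact expect_congr rfl fun u _ ↦ expect_comm _ _ _

lemma norm_sq_expect_mul_le [Nonempty V] (g : U → V → ℂ) {h : V → ℂ} (hh : ∀ v, ‖h v‖ ≤ 1) :
    ‖𝔼 u, 𝔼 v, h v * g u v‖ ^ 2 ≤ 𝔼 u, 𝔼 u', ‖𝔼 v, g u v * conj (g u' v)‖ := by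
  have norm_le : ‖𝔼 u, 𝔼 v, h v * g u v‖ ≤ 𝔼 v, ‖𝔼 u, g u v‖ := by
    rw [expect_comm]
    refine (RCLike.norm_expect_le (K := ℂ)).trans (expect_le_expect fun v _ ↦ ?_)
    rw [← mul_expect, norm_mul]
    exact mul_le_of_le_one_left (norm_nonneg _) (hh v)
  calc ‖𝔼 u, 𝔼 v, h v * g u v‖ ^ 2
      ≤ (𝔼 v, ‖𝔼 u, g u v‖) ^ 2 := pow_le_pow_left₀ (norm_nonneg _) norm_le 2
    _ ≤ 𝔼 v, ‖𝔼 u, g u v‖ ^ 2 := pow_expect_le_expect_pow (fun _ ↦ norm_nonneg _) 2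
    _ = ‖𝔼 u, 𝔼 u', 𝔼 v, g u v * conj (g u' v)‖ := by
        rw [← ofReal_expect_norm_sq_expect, Complex.norm_of_nonneg]
        exact expect_nonneg fun _ _ ↦ by positivity
    _ ≤ 𝔼 u, 𝔼 u', ‖𝔼 v, g u v * conj (g u' v)‖ :=
        (RCLike.norm_expect_le (K := ℂ)).trans
          (expect_le_expect fun _ _ ↦ RCLike.norm_expect_le (K := ℂ))

end Expectation

section CylinderIntersection

variable {k : ℕ} {W : Type}

lemma IsCylinderIntersection.inter {S T : Set (Fin k → W)} (hS : IsCylinderIntersection k W S)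
    (hT : IsCylinderIntersection k W T) : IsCylinderIntersection k W (S ∩ T) := by
  obtain ⟨C, hC, rfl⟩ := hS
  obtain ⟨D, hD, rfl⟩ := hT
  exact ⟨fun i ↦ C i ∩ D i, fun i x x' h ↦ and_congr (hC i x x' h) (hD i x x' h),
    (Set.iInter_inter_distrib C D).symm⟩

lemma IsCylinderIntersection.exists_cons_mem_iff {n : ℕ} {S : Set (Fin (n + 1) → W)}
    (hS : IsCylinderIntersection (n + 1) W S) :
    ∃ (B : Set (Fin n → W)) (R : W → Set (Fin n → W)),
      (∀ u, IsCylinderIntersection n W (R u)) ∧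
        ∀ u v, (Fin.cons u v : Fin (n + 1) → W) ∈ S ↔ v ∈ B ∧ v ∈ R u := by
  obtain ⟨C, hC, rfl⟩ := hS
  have mem_zero_iff (u u' : W) (v : Fin n → W) :
      (Fin.cons u v : Fin (n + 1) → W) ∈ C 0 ↔ (Fin.cons u' v : Fin (n + 1) → W) ∈ C 0 := by
    refine hC 0 _ _ fun j hj ↦ ?_
    obtain ⟨i, rfl⟩ := Fin.exists_succ_eq_of_ne_zero hj
    simp only [Fin.cons_succ]
  refine ⟨{v | ∃ u, (Fin.cons u v : Fin (n + 1) → W) ∈ C 0},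
    fun u ↦ ⋂ i : Fin n, {v | (Fin.cons u v : Fin (n + 1) → W) ∈ C i.succ},
    fun u ↦ ⟨_, fun i v v' h ↦ hC i.succ _ _ fun j ↦ ?_, rfl⟩, fun u v ↦ ?_⟩
  · refine Fin.cases (fun _ ↦ rfl) (fun j hj ↦ ?_) j
    simpa only [Fin.cons_succ] using h j (ne_of_apply_ne Fin.succ hj)
  · simp only [Set.mem_iInter, Fin.forall_fin_succ, Set.mem_ofPred_eq]
    exact and_congr_left fun _ ↦ ⟨fun h ↦ ⟨u, h⟩, fun ⟨u', h⟩ ↦ (mem_zero_iff u' u v).1 h⟩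

lemma IsCylinderIntersection.eq_empty_or_eq_univ {S : Set (Fin 1 → W)}
    (hS : IsCylinderIntersection 1 W S) : S = ∅ ∨ S = Set.univ := by
  obtain ⟨C, hC, rfl⟩ := hS
  refine Set.eq_empty_or_nonempty _ |>.imp_right fun ⟨x, hx⟩ ↦ ?_
  simp only [Set.mem_iInter, Set.eq_univ_iff_forall] at hx ⊢
  exact fun y i ↦ (hC i x y fun j hj ↦ absurd (Subsingleton.elim j i) hj).1 (hx i)

-- The first cylinder does not depend on the first coordinate, so the Cauchy-Schwarz inequality
-- removes it.
lemma IsCylinderIntersection.exists_norm_sq_expect_le [Fintype W] [Nonempty W] {n : ℕ}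
    {S : Set (Fin (n + 1) → W)} (hS : IsCylinderIntersection (n + 1) W S)
    (g : (Fin (n + 1) → W) → ℂ) :
    ∃ R : W → W → Set (Fin n → W), (∀ u u', IsCylinderIntersection n W (R u u')) ∧
      ‖𝔼 x, S.indicator g x‖ ^ 2 ≤ 𝔼 u, 𝔼 u', ‖𝔼 v, (R u u').indicator
        (fun v ↦ g (Fin.cons u v) * conj (g (Fin.cons u' v))) v‖ := by
  classical
  obtain ⟨B, R, hR, hBR⟩ := hS.exists_cons_mem_iff
  refine ⟨fun u u' ↦ R u ∩ R u', fun u u' ↦ (hR u).inter (hR u'), ?_⟩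
  have indicator_cons (u : W) (v : Fin n → W) : S.indicator g (Fin.cons u v) =
      B.indicator 1 v * (R u).indicator (fun v ↦ g (Fin.cons u v)) v := by
    simp only [Set.indicator_apply, hBR, ite_and, Pi.one_apply, ite_mul, one_mul, zero_mul]
  have indicator_mul_conj (u u' : W) (v : Fin n → W) :
      (R u ∩ R u').indicator (fun v ↦ g (Fin.cons u v) * conj (g (Fin.cons u' v))) v =
        (R u).indicator (fun v ↦ g (Fin.cons u v)) v *
          conj ((R u').indicator (fun v ↦ g (Fin.cons u' v)) v) := by
    simp only [Set.indicator_apply, Set.mem_inter_iff, ite_and, apply_ite conj, map_zero,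
      mul_ite, ite_mul, zero_mul, mul_zero]
    split_ifs <;> rfl
  simp only [expect_fin_cons, indicator_cons, indicator_mul_conj]
  refine norm_sq_expect_mul_le _ fun v ↦ ?_
  by_cases hv : v ∈ B <;> simp [hv]

end CylinderIntersection

section Discrepancy

variable {k : ℕ} {W Y : Type} {A : (Fin k → W) → Y} {S T : Set (Fin k → W)} {y : Y}

lemma discVal_nonneg (A : (Fin k → W) → Y) (S : Set (Fin k → W)) (y : Y) :
    0 ≤ discVal k W Y A S y := by
  unfold discVal
  positivity

lemma discVal_le_multiDisc [Finite W] [Finite Y] (hS : IsCylinderIntersection k W S) :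
    discVal k W Y A S y ≤ multiDisc k W Y A := by
  have finite_range : (Set.range fun p : Set (Fin k → W) × Y ↦ discVal k W Y A p.1 p.2).Finite :=
    Set.finite_range _
  refine le_csSup (finite_range.bddAbove.mono ?_) ⟨S, y, hS, rfl⟩
  rintro _ ⟨S, y, -, rfl⟩
  exact ⟨(S, y), rfl⟩

lemma multiDisc_nonneg (A : (Fin k → W) → Y) : 0 ≤ multiDisc k W Y A :=
  Real.sSup_nonneg <| by
    rintro _ ⟨S, y, -, rfl⟩
    exact discVal_nonneg A S y

lemma multiDisc_le {δ : ℝ} (hδ : 0 ≤ δ)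
    (h : ∀ S y, IsCylinderIntersection k W S → discVal k W Y A S y ≤ δ) :
    multiDisc k W Y A ≤ δ :=
  Real.sSup_le (by rintro _ ⟨S, y, hS, rfl⟩; exact h S y hS) hδ

lemma discVal_sdiff_le [Finite W] :
    discVal k W Y A (S \ T) y ≤ discVal k W Y A S y + discVal k W Y A (S ∩ T) y := by
  have ncard_split (U : Set (Fin k → W)) : ((U \ T).ncard : ℝ) = U.ncard - (U ∩ T).ncard := by
    rw [← Set.ncard_inter_add_ncard_sdiff_eq_ncard U T]
    push_cast
    ring
  simp only [discVal, Nat.card_coe_set_eq, ← add_div, ← Set.inter_sdiff_assoc, ← Set.inter_assoc,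
    ncard_split]
  gcongr
  refine le_trans (le_of_eq ?_) (abs_sub _ _)
  ring_nf

-- Splitting off one removed set doubles the number of cylinder intersections.
lemma discVal_sdiff_biUnion_le [Finite W] [Finite Y] {ι : Type*} (D : ι → Set (Fin k → W))
    (hD : ∀ i, IsCylinderIntersection k W (D i)) (I : Finset ι)
    (hS : IsCylinderIntersection k W S) :
    discVal k W Y A (S \ ⋃ i ∈ I, D i) y ≤ 2 ^ #I * multiDisc k W Y A := by
  classical
  induction I using Finset.induction_on generalizing S with
  | empty => simpa using discVal_le_multiDisc hS
  | insert i I hi ih =>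
    have sdiff_insert : S \ ⋃ j ∈ insert i I, D j = (S \ ⋃ j ∈ I, D j) \ D i := by
      rw [set_biUnion_insert, Set.union_comm, Set.sdiff_sdiff]
    have inter_sdiff : (S \ ⋃ j ∈ I, D j) ∩ D i = (S ∩ D i) \ ⋃ j ∈ I, D j :=
      Set.inter_sdiff_right_comm.symm
    calc discVal k W Y A (S \ ⋃ j ∈ insert i I, D j) y
        ≤ discVal k W Y A (S \ ⋃ j ∈ I, D j) y +
            discVal k W Y A ((S ∩ D i) \ ⋃ j ∈ I, D j) y := by
          rw [sdiff_insert, ← inter_sdiff]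
          exact discVal_sdiff_le
      _ ≤ 2 ^ #I * multiDisc k W Y A + 2 ^ #I * multiDisc k W Y A :=
          add_le_add (ih hS) (ih (hS.inter (hD i)))
      _ = 2 ^ #(insert i I) * multiDisc k W Y A := by
          rw [card_insert_of_notMem hi]
          ring

end Discrepancy

section Fourier

variable {k : ℕ} {W Y : Type} [Fintype W] {A : (Fin k → W) → Y}
  {S : Set (Fin k → W)} {y : Y}

lemma discVal_eq_norm_expect [Fintype Y] [DecidableEq Y] :
    discVal k W Y A S y = ‖𝔼 x, S.indicator
      (fun x ↦ (if A x = y then 1 else 0) - (Fintype.card Y : ℂ)⁻¹) x‖ := by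
  classical
  have sum_indicator : ∑ x, S.indicator
      (fun x ↦ (if A x = y then 1 else 0) - (Fintype.card Y : ℂ)⁻¹) x =
        ((#{x | A x = y ∧ x ∈ S} - #{x | x ∈ S} / Fintype.card Y : ℝ) : ℂ) := by
    simp only [Set.indicator_apply, ← sum_filter, sum_sub_distrib, filter_filter,
      sum_const, nsmul_eq_mul, and_comm]
    push_cast
    ring
  rw [Fintype.expect_eq_sum_div_card, sum_indicator, norm_div, Complex.norm_real,
    Real.norm_eq_abs, Complex.norm_natCast, discVal, Nat.card_eq_fintype_card,
    Nat.card_eq_fintype_card, Nat.card_eq_fintype_card, Nat.card_eq_fintype_card]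
  simp only [Fintype.card_subtype, Set.mem_inter_iff, Set.mem_preimage, Set.mem_singleton_iff]

lemma ite_sub_inv_card_eq [Fintype Y] [AddCommGroup Y] [DecidableEq Y] (a y : Y) :
    (if a = y then 1 else 0) - (Fintype.card Y : ℂ)⁻¹ =
      (Fintype.card Y : ℂ)⁻¹ * ∑ ψ ∈ univ.erase (0 : AddChar Y ℂ), ψ (-y) * ψ a := by
  have sum_erase := AddChar.sum_apply_eq_ite (a - y)
  rw [← add_sum_erase _ _ (mem_univ (0 : AddChar Y ℂ)), AddChar.zero_apply] at sum_erase
  have card_ne_zero : (Fintype.card Y : ℂ) ≠ 0 := mod_cast Fintype.card_ne_zero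
  simp only [← AddChar.map_add_eq_mul, neg_add_eq_sub, eq_sub_of_add_eq' sum_erase, sub_eq_zero]
  split_ifs <;> field_simp
  simp

lemma discVal_le_of_forall_addChar [AddCommGroup Y] [Finite Y] {δ : ℝ} (hδ : 0 ≤ δ)
    (h : ∀ ψ : AddChar Y ℂ, ψ ≠ 0 → ‖𝔼 x, S.indicator (fun x ↦ ψ (A x)) x‖ ≤ δ) :
    discVal k W Y A S y ≤ δ := by
  classical
  have := Fintype.ofFinite Y
  have expect_eq : 𝔼 x, S.indicator
      (fun x ↦ (if A x = y then 1 else 0) - (Fintype.card Y : ℂ)⁻¹) x =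
        (Fintype.card Y : ℂ)⁻¹ * ∑ ψ ∈ univ.erase (0 : AddChar Y ℂ),
          ψ (-y) * 𝔼 x, S.indicator (fun x ↦ ψ (A x)) x := by
    simp only [ite_sub_inv_card_eq, mul_expect]
    rw [← expect_sum_comm, mul_expect]
    refine expect_congr rfl fun x _ ↦ ?_
    by_cases hx : x ∈ S <;> simp [hx]
  have sum_le : ‖∑ ψ ∈ univ.erase (0 : AddChar Y ℂ),
      ψ (-y) * 𝔼 x, S.indicator (fun x ↦ ψ (A x)) x‖ ≤ Fintype.card Y * δ := by
    calc _ ≤ #(univ.erase (0 : AddChar Y ℂ)) • δ := by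
          refine (norm_sum_le_of_le _ fun ψ hψ ↦ ?_).trans_eq (sum_const _)
          rw [norm_mul, AddChar.norm_apply, one_mul]
          exact h ψ (ne_of_mem_erase hψ)
      _ ≤ Fintype.card Y * δ := by
          rw [nsmul_eq_mul, ← AddChar.card_eq (α := Y)]
          gcongr
          exact card_le_univ _
  rw [discVal_eq_norm_expect, expect_eq, norm_mul, norm_inv, Complex.norm_natCast,
    inv_mul_le_iff₀ (mod_cast Fintype.card_pos)]
  exact sum_le

end Fourier

section Covering

variable {k : ℕ} {W Y : Type} [Finite W] {A : (Fin k → W) → Y}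

lemma ncard_preimage_inter_le [Nonempty W] {S : Set (Fin k → W)} {y : Y} {ε : ℝ}
    (h : discVal k W Y A S y ≤ ε) :
    ((A ⁻¹' {y} ∩ S).ncard : ℝ) ≤ S.ncard / Nat.card Y + Nat.card (Fin k → W) * ε := by
  rw [discVal, div_le_iff₀ (mod_cast Nat.card_pos)] at h
  simp only [Nat.card_coe_set_eq] at h
  linarith [le_of_abs_le h]

lemma sum_ncard_le_card {α ι : Type*} [Finite α] [Fintype ι] {E : ι → Set α}
    (hE : Pairwise fun i j ↦ Disjoint (E i) (E j)) : ∑ i, (E i).ncard ≤ Nat.card α := by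
  rw [← finsum_eq_sum_of_fintype, ← Set.ncard_iUnion_of_finite (fun i ↦ Set.toFinite _) hE]
  exact Set.ncard_le_card _

lemma card_le_of_forall_discVal_le [Nonempty W] [Fintype Y] {T : Type*} [Fintype T]
    {E : T → Y → Set (Fin k → W)} {ε : ℝ}
    (hdisj : ∀ t, Pairwise fun y y' ↦ Disjoint (E t y) (E t y'))
    (hcover : ∀ x, ∃ t, x ∈ E t (A x)) (hdisc : ∀ t y, discVal k W Y A (E t y) y ≤ ε) :
    (Fintype.card Y : ℝ) ≤ Fintype.card T * (1 + Fintype.card Y ^ 2 * ε) := by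
  set X := Nat.card (Fin k → W)
  set N := Fintype.card Y
  have : Nonempty Y := Nonempty.map A inferInstance
  have X_pos : (0 : ℝ) < X := mod_cast Nat.card_pos
  have N_pos : (0 : ℝ) < N := mod_cast Fintype.card_pos
  have le_sum : (X : ℝ) ≤ ∑ t, ∑ y, ((A ⁻¹' {y} ∩ E t y).ncard : ℝ) := by
    have union_eq : ⋃ t, ⋃ y, A ⁻¹' {y} ∩ E t y = Set.univ := by
      simpa [Set.eq_univ_iff_forall] using hcover
    have X_eq : X = (⋃ t, ⋃ y, A ⁻¹' {y} ∩ E t y).ncard := by rw [union_eq, Set.ncard_univ]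
    rw [X_eq]
    exact_mod_cast (Set.ncard_iUnion_le_of_fintype _).trans
      (sum_le_sum fun t _ ↦ Set.ncard_iUnion_le_of_fintype _)
  have slice_le (t : T) :
      ∑ y, ((A ⁻¹' {y} ∩ E t y).ncard : ℝ) ≤ X * (1 + N ^ 2 * ε) / N := by
    have sum_le : ∑ y, ((E t y).ncard : ℝ) ≤ X := mod_cast sum_ncard_le_card (hdisj t)
    calc ∑ y, ((A ⁻¹' {y} ∩ E t y).ncard : ℝ)
        ≤ ∑ y, ((E t y).ncard / Nat.card Y + X * ε) :=
          sum_le_sum fun y _ ↦ ncard_preimage_inter_le (hdisc t y)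
      _ = (∑ y, ((E t y).ncard : ℝ)) / N + N * (X * ε) := by
          rw [sum_add_distrib, ← sum_div, sum_const, nsmul_eq_mul, card_univ,
            Nat.card_eq_fintype_card]
      _ ≤ X / N + N * (X * ε) := by gcongr
      _ = X * (1 + N ^ 2 * ε) / N := by field_simp
  have sum_slice_le := le_sum.trans (sum_le_card_nsmul _ _ _ fun t _ ↦ slice_le t)
  rw [nsmul_eq_mul, card_univ, mul_div_assoc', le_div_iff₀ N_pos, mul_left_comm] at sum_slice_le
  exact le_of_mul_le_mul_left sum_slice_le X_pos

end Covering

section Rank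

lemma finrank_range_add_finrank_range_le {K V₁ V₂ V₃ : Type*} [DivisionRing K]
    [AddCommGroup V₁] [Module K V₁] [AddCommGroup V₂] [Module K V₂] [FiniteDimensional K V₂]
    [AddCommGroup V₃] [Module K V₃] (f : V₂ →ₗ[K] V₃) (g : V₁ →ₗ[K] V₂) :
    Module.finrank K f.range + Module.finrank K g.range ≤
      Module.finrank K (f ∘ₗ g).range + Module.finrank K V₂ := by
  have range_eq : (f.domRestrict g.range).range = (f ∘ₗ g).range := by
    rw [LinearMap.range_domRestrict, LinearMap.range_comp]
  have ker_le : Module.finrank K (f.domRestrict g.range).ker ≤ Module.finrank K f.ker := by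
    rw [LinearMap.ker_domRestrict, ← Submodule.finrank_map_subtype_eq]
    exact Submodule.finrank_mono (Submodule.map_comap_le _ _)
  have rank_nullity := f.finrank_range_add_finrank_ker
  have rank_nullity_restrict := (f.domRestrict g.range).finrank_range_add_finrank_ker
  rw [range_eq] at rank_nullity_restrict
  lia

lemma rank_add_rank_le_rank_mul_add_card {K l m n : Type*} [Field K] [Fintype m] [Fintype n]
    (A : Matrix l m K) (B : Matrix m n K) :
    A.rank + B.rank ≤ (A * B).rank + Fintype.card m := by
  rw [Matrix.rank, Matrix.rank, Matrix.rank, Matrix.mulVecLin_mul,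
    ← Module.finrank_fintype_fun_eq_card K]
  exact finrank_range_add_finrank_range_le A.mulVecLin B.mulVecLin

variable {F : Type*} [Field F] [Fintype F]

lemma pow_le_card_linearIndependent {V : Type*} [AddCommGroup V] [Module F V]
    [FiniteDimensional F V] {s : ℕ} (hs : s < Module.finrank F V) :
    Fintype.card F ^ (s * (s + 1)) ≤
      Nat.card {v : Fin (s + 1) → V // LinearIndependent F v} := by
  have : Fintype V := @Fintype.ofFinite _ (Module.finite_of_finite F)
  set q := Fintype.card F
  have one_lt : 1 < q := Fintype.one_lt_card
  have pow_le_factor (i : Fin (s + 1)) :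
      q ^ s ≤ q ^ Module.finrank F V - q ^ (i : ℕ) := by
    have pow_le : q ^ (i : ℕ) ≤ q ^ s := Nat.pow_le_pow_right one_lt.le (by lia)
    have two_mul_pow_le : 2 * q ^ s ≤ q ^ Module.finrank F V :=
      calc 2 * q ^ s ≤ q ^ (s + 1) := by
            rw [pow_succ']
            gcongr
            exact one_lt
        _ ≤ q ^ Module.finrank F V := Nat.pow_le_pow_right one_lt.le hs
    lia
  calc q ^ (s * (s + 1)) = ∏ _i : Fin (s + 1), q ^ s := by simp [pow_mul]
    _ ≤ ∏ i : Fin (s + 1), (q ^ Module.finrank F V - q ^ (i : ℕ)) :=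
        prod_le_prod' fun i _ ↦ pow_le_factor i
    _ = Nat.card {v : Fin (s + 1) → V // LinearIndependent F v} :=
        (card_linearIndependent hs).symm

lemma card_forall_mulVec_eq_zero_mul {m n κ : Type*} [Fintype m] [Fintype n]
    [Fintype κ] {v : κ → n → F} (hv : LinearIndependent F v) :
    Nat.card {B : Matrix m n F // ∀ j, B.mulVec (v j) = 0} *
        Fintype.card F ^ (Fintype.card m * Fintype.card κ) =
      Fintype.card F ^ (Fintype.card m * Fintype.card n) := by
  classical
  let Φ : Matrix m n F →ₗ[F] κ → m → F := LinearMap.pi fun j ↦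
    { toFun := fun B ↦ B.mulVec (v j)
      map_add' := fun A B ↦ Matrix.add_mulVec A B _
      map_smul' := fun a B ↦ Matrix.smul_mulVec a B _ }
  have Φ_surjective : Function.Surjective Φ := by
    intro w
    obtain ⟨g, hg⟩ := LinearMap.exists_leftInverse_of_injective _ (LinearMap.ker_eq_bot.2 hv)
    have g_apply (j : κ) : g (v j) = Finsupp.single j 1 := by
      simpa using LinearMap.congr_fun hg (Finsupp.single j 1)
    refine ⟨LinearMap.toMatrix' (Finsupp.linearCombination F w ∘ₗ g), ?_⟩
    ext1 j
    simp [Φ, LinearMap.toMatrix'_mulVec, g_apply]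
  have card_eq : Nat.card {B : Matrix m n F // ∀ j, B.mulVec (v j) = 0} = Nat.card Φ.ker :=
    Nat.card_congr (Equiv.subtypeEquivRight fun B ↦ (funext_iff (f := Φ B) (g := 0)).symm)
  have rank_nullity := Φ.finrank_range_add_finrank_ker
  rw [LinearMap.range_eq_top.2 Φ_surjective, finrank_top, Module.finrank_matrix,
    Module.finrank_pi_fintype] at rank_nullity
  simp only [Module.finrank_fintype_fun_eq_card, sum_const, card_univ, smul_eq_mul,
    Module.finrank_self, mul_one] at rank_nullity
  rw [card_eq, Module.natCard_eq_pow_finrank (K := F), Nat.card_eq_fintype_card, ← pow_add,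
    ← rank_nullity, add_comm, mul_comm (Fintype.card m)]

variable {ι : Type*} [Fintype ι]

lemma pow_le_card_linearIndependent_mulVec_eq_zero {B : Matrix ι ι F} {s : ℕ}
    (hB : B.rank + s < Fintype.card ι) :
    Fintype.card F ^ (s * (s + 1)) ≤ Nat.card {v : Fin (s + 1) → ι → F //
      LinearIndependent F v ∧ ∀ j, B.mulVec (v j) = 0} := by
  have rank_nullity : B.rank + Module.finrank F B.mulVecLin.ker = Fintype.card ι := by
    simpa only [Matrix.rank, Module.finrank_fintype_fun_eq_card] using
      B.mulVecLin.finrank_range_add_finrank_ker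
  refine (pow_le_card_linearIndependent (F := F) (V := B.mulVecLin.ker) (by lia)).trans ?_
  refine Nat.card_le_card_of_injective (fun v ↦ ⟨fun j ↦ v.1 j,
    v.2.map' B.mulVecLin.ker.subtype (Submodule.ker_subtype _), fun j ↦ (v.1 j).2⟩) ?_
  intro v w h
  ext j : 3
  exact congrFun (congrArg Subtype.val h) j

variable [DecidableEq ι]

lemma card_rank_add_lt_mul_pow_le (s : ℕ) :
    #{B : Matrix ι ι F | B.rank + s < Fintype.card ι} * Fintype.card F ^ (s * (s + 1)) ≤
      Fintype.card F ^ (Fintype.card ι * Fintype.card ι) := by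
  classical
  set q := Fintype.card F
  set d := Fintype.card ι
  have q_pos : 0 < q := Fintype.card_pos
  let bad : Finset (Matrix ι ι F) := {B | B.rank + s < d}
  let indep : Finset (Fin (s + 1) → ι → F) := {v | LinearIndependent F v}
  let kills (B : Matrix ι ι F) (v : Fin (s + 1) → ι → F) : Prop := ∀ j, B.mulVec (v j) = 0
  have above (B) (hB : B ∈ bad) : q ^ (s * (s + 1)) ≤ #(indep.bipartiteAbove kills B) := by
    refine (pow_le_card_linearIndependent_mulVec_eq_zero (mem_filter.1 hB).2).trans_eq ?_
    rw [Nat.card_eq_fintype_card, Fintype.card_subtype, bipartiteAbove, filter_filter]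
  have below (v) (hv : v ∈ indep) :
      #(bad.bipartiteBelow kills v) * q ^ (d * (s + 1)) ≤ q ^ (d * d) := by
    have card_eq := card_forall_mulVec_eq_zero_mul (m := ι) (mem_filter.1 hv).2
    rw [Nat.card_eq_fintype_card, Fintype.card_subtype, Fintype.card_fin] at card_eq
    rw [← card_eq]
    gcongr
    exact filter_subset_filter _ (subset_univ _)
  have card_indep : #indep ≤ q ^ (d * (s + 1)) := by
    refine (card_le_univ _).trans_eq ?_
    simp [q, d, ← pow_mul]
  refine le_of_mul_le_mul_right ?_ (pow_pos q_pos (d * (s + 1)))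
  calc #bad * q ^ (s * (s + 1)) * q ^ (d * (s + 1))
      ≤ (∑ B ∈ bad, #(indep.bipartiteAbove kills B)) * q ^ (d * (s + 1)) := by
        gcongr
        exact card_nsmul_le_sum _ _ _ above
    _ = ∑ v ∈ indep, #(bad.bipartiteBelow kills v) * q ^ (d * (s + 1)) := by
        rw [sum_card_bipartiteAbove_eq_sum_card_bipartiteBelow, sum_mul]
    _ ≤ #indep * q ^ (d * d) := sum_le_card_nsmul _ _ _ below
    _ ≤ q ^ (d * d) * q ^ (d * (s + 1)) := by
        rw [mul_comm]
        gcongr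

lemma expect_rank_add_lt_le (s : ℕ) :
    (𝔼 B : Matrix ι ι F, if B.rank + s < Fintype.card ι then (1 : ℝ) else 0) ≤
      ((Fintype.card F : ℝ) ^ (s * (s + 1)))⁻¹ := by
  have : (0 : ℝ) < Fintype.card F := mod_cast Fintype.card_pos
  have card_matrix :
      Fintype.card (Matrix ι ι F) = Fintype.card F ^ (Fintype.card ι * Fintype.card ι) := by
    rw [Module.card_eq_pow_finrank (K := F), Module.finrank_matrix, Module.finrank_self, mul_one]
  rw [Fintype.expect_eq_sum_div_card, sum_boole, card_matrix, ← one_div,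
    div_le_div_iff₀ (by positivity) (by positivity), one_mul]
  exact_mod_cast card_rank_add_lt_mul_pow_le s

end Rank

section Numerics

lemma natCast_rpow_mul_two_rpow_mul_sqrt (k : ℕ) (r : ℝ) :
    (k : ℝ) ^ ((3 : ℝ) / 2) * 2 ^ ((k : ℝ) / 2) * √r = k * √(k * 2 ^ k * r) := by
  have rpow_three_half : (k : ℝ) ^ ((3 : ℝ) / 2) = k * √k := by
    rw [show (3 : ℝ) / 2 = 1 + 1 / 2 by norm_num,
      Real.rpow_add_of_nonneg k.cast_nonneg zero_le_one (by norm_num), Real.rpow_one,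
      Real.sqrt_eq_rpow]
  have two_rpow_half : (2 : ℝ) ^ ((k : ℝ) / 2) = √(2 ^ k) := by
    rw [Real.sqrt_eq_rpow, ← Real.rpow_natCast, ← Real.rpow_mul zero_le_two, mul_one_div]
  rw [rpow_three_half, two_rpow_half, mul_assoc (k : ℝ) (2 ^ k), Real.sqrt_mul k.cast_nonneg,
    Real.sqrt_mul (by positivity)]
  ring

lemma two_rpow_two_mul_le_pow {q m : ℝ} (hq : 1 < q) (hm : Real.logb 2 q ≤ m) {s : ℕ}
    (hs : s = ⌊2 * √(m / Real.logb 2 q)⌋₊) : (2 : ℝ) ^ (2 * m) ≤ q ^ (s * (s + 1)) := by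
  set l := Real.logb 2 q
  have l_pos : 0 < l := Real.logb_pos one_lt_two hq
  set ρ := √(m / l)
  have one_le_ρ : 1 ≤ ρ := Real.one_le_sqrt.2 ((one_le_div l_pos).2 hm)
  have ρ_sq : l * ρ ^ 2 = m := by
    rw [Real.sq_sqrt (div_nonneg (l_pos.le.trans hm) l_pos.le)]
    field_simp
  have lt_s : 2 * ρ < s + 1 := hs ▸ Nat.lt_floor_add_one _
  have two_mul_m_le : 2 * m ≤ l * (s * (s + 1)) := by
    have two_mul_sq_le : 2 * ρ ^ 2 ≤ s * (s + 1) := by nlinarith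
    rw [← ρ_sq, mul_left_comm]
    exact mul_le_mul_of_nonneg_left two_mul_sq_le l_pos.le
  calc (2 : ℝ) ^ (2 * m) ≤ 2 ^ (l * (s * (s + 1))) :=
        Real.rpow_le_rpow_of_exponent_le one_le_two two_mul_m_le
    _ = q ^ (s * (s + 1)) := by
        rw [Real.rpow_mul zero_le_two, Real.rpow_logb two_pos (by norm_num) (by linarith),
          ← Real.rpow_natCast]
        push_cast
        rfl

lemma pow_three_mul_two_pow_mul_inv_lt_one (q : ℕ) :
    (q : ℝ) ^ 3 * 2 ^ q * ((2 : ℝ) ^ (5 * q))⁻¹ < 1 := by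
  have lt_two_pow : (q : ℝ) < 2 ^ q := mod_cast Nat.lt_two_pow_self
  rw [← div_eq_mul_inv, div_lt_one (by positivity)]
  calc (q : ℝ) ^ 3 * 2 ^ q < (2 ^ q) ^ 3 * 2 ^ q := by gcongr
    _ = 2 ^ (4 * q) := by ring
    _ ≤ 2 ^ (5 * q) := by
        gcongr
        · exact one_le_two
        · norm_num

lemma natCast_mul_two_pow_le (n : ℕ) {q : ℕ} (hq : 1 ≤ q) :
    (n : ℝ) * (2 ^ (5 * q)) ^ 2 ^ n ≤ 2 ^ (2 * ((n + 2 : ℕ) * 2 ^ (n + 2) * q : ℝ)) := by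
  have le_exponent : n + 5 * q * 2 ^ n ≤ 2 * ((n + 2) * 2 ^ (n + 2) * q) := by
    have n_le : n ≤ 2 ^ n * q := Nat.lt_two_pow_self.le.trans (Nat.le_mul_of_pos_right _ hq)
    calc n + 5 * q * 2 ^ n ≤ 2 ^ n * q + 5 * q * 2 ^ n := by gcongr
      _ = 6 * (2 ^ n * q) := by ring
      _ ≤ (8 * (n + 2)) * (2 ^ n * q) := by
          gcongr
          lia
      _ = 2 * ((n + 2) * 2 ^ (n + 2) * q) := by ring
  calc (n : ℝ) * (2 ^ (5 * q)) ^ 2 ^ n ≤ 2 ^ n * (2 ^ (5 * q)) ^ 2 ^ n := by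
        gcongr
        exact_mod_cast Nat.lt_two_pow_self.le
    _ = 2 ^ (n + 5 * q * 2 ^ n) := by rw [← pow_mul, ← pow_add]
    _ ≤ 2 ^ (2 * ((n + 2) * 2 ^ (n + 2) * q)) := pow_le_pow_right₀ one_le_two le_exponent
    _ = 2 ^ (2 * ((n + 2 : ℕ) * 2 ^ (n + 2) * q : ℝ)) := by
        rw [← Real.rpow_natCast]
        push_cast
        rfl

end Numerics

section Trace

variable {ι F : Type} [Fintype ι] [DecidableEq ι] [Field F] [Fintype F] [DecidableEq F]

/-- The probability that `L * X₁ * ⋯ * Xₙ = 0` for independent uniformly random matrices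
`X₁, …, Xₙ`. -/
noncomputable def zeroProb (n : ℕ) (L : Matrix ι ι F) : ℝ :=
  𝔼 x : Fin n → Matrix ι ι F, if L * (List.ofFn x).prod = 0 then 1 else 0

lemma zeroProb_zero (L : Matrix ι ι F) : zeroProb 0 L = if L = 0 then 1 else 0 := by
  simp [zeroProb]

lemma zeroProb_succ (n : ℕ) (L : Matrix ι ι F) :
    zeroProb (n + 1) L = 𝔼 u, zeroProb n (L * u) := by
  simp only [zeroProb, expect_fin_cons, List.ofFn_cons, List.prod_cons, mul_assoc]

lemma zeroProb_nonneg (n : ℕ) (L : Matrix ι ι F) : 0 ≤ zeroProb n L :=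
  expect_nonneg fun _ _ ↦ by positivity

lemma zeroProb_le_one (n : ℕ) (L : Matrix ι ι F) : zeroProb n L ≤ 1 :=
  expect_le univ_nonempty fun _ _ ↦ by split_ifs <;> norm_num

lemma expect_addChar_trace_mul {ψ : AddChar F ℂ} (hψ : ψ ≠ 0) (L : Matrix ι ι F) :
    𝔼 z, ψ (L * z).trace = if L = 0 then 1 else 0 := by
  let φ : AddChar (Matrix ι ι F) ℂ :=
    ψ.compAddMonoidHom ((Matrix.traceAddMonoidHom ι F).comp (AddMonoidHom.mulLeft L))
  have φ_eq_zero_iff : φ = 0 ↔ L = 0 := by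
    refine ⟨fun hφ ↦ by_contra fun hL ↦ hψ ?_, fun hL ↦ ?_⟩
    · obtain ⟨i, j, hij⟩ : ∃ i j, L i j ≠ 0 := by
        by_contra! h
        exact hL (Matrix.ext h)
      ext a
      simpa [φ, hij, Matrix.trace_mul_single] using
        DFunLike.congr_fun hφ (Matrix.single j i ((L i j)⁻¹ * a))
    · ext z
      simp [φ, hL]
  classical
  exact (AddChar.expect_eq_ite φ).trans (if_congr φ_eq_zero_iff rfl rfl)

lemma norm_expect_indicator_addChar_trace_pow_le {ψ : AddChar F ℂ} (hψ : ψ ≠ 0) {n : ℕ}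
    {S : Set (Fin (n + 1) → Matrix ι ι F)}
    (hS : IsCylinderIntersection (n + 1) (Matrix ι ι F) S) (L : Matrix ι ι F) :
    ‖𝔼 x, S.indicator (fun x ↦ ψ (L * (List.ofFn x).prod).trace) x‖ ^ 2 ^ n ≤ zeroProb n L := by
  induction n generalizing L with
  | zero =>
    obtain rfl | rfl := hS.eq_empty_or_eq_univ
    · simpa using zeroProb_nonneg 0 L
    · simp only [Set.indicator_univ, expect_fin_cons, List.ofFn_cons, List.prod_cons,
        List.ofFn_zero, List.prod_nil, mul_one, Fintype.expect_const,
        expect_addChar_trace_mul hψ, zeroProb_zero]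
      split_ifs <;> simp
  | succ n ih =>
    obtain ⟨R, hR, norm_sq_le⟩ :=
      hS.exists_norm_sq_expect_le fun x ↦ ψ (L * (List.ofFn x).prod).trace
    have mul_conj_eq (u u' : Matrix ι ι F) (v : Fin (n + 1) → Matrix ι ι F) :
        ψ (L * (List.ofFn (Fin.cons u v : Fin (n + 2) → _)).prod).trace *
          conj (ψ (L * (List.ofFn (Fin.cons u' v : Fin (n + 2) → _)).prod).trace) =
            ψ (L * (u - u') * (List.ofFn v).prod).trace := by
      rw [← AddChar.map_neg_eq_conj, ← AddChar.map_add_eq_mul, ← Matrix.trace_neg,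
        ← Matrix.trace_add, List.ofFn_cons, List.ofFn_cons, List.prod_cons, List.prod_cons]
      congr 2
      noncomm_ring
    simp only [mul_conj_eq] at norm_sq_le
    calc _ = (‖𝔼 x, S.indicator (fun x ↦ ψ (L * (List.ofFn x).prod).trace) x‖ ^ 2) ^ 2 ^ n := by
          rw [pow_succ', pow_mul]
      _ ≤ (𝔼 u, 𝔼 u', ‖𝔼 v, (R u u').indicator
            (fun v ↦ ψ (L * (u - u') * (List.ofFn v).prod).trace) v‖) ^ 2 ^ n := by gcongr
      _ ≤ 𝔼 u, 𝔼 u', ‖𝔼 v, (R u u').indicator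
            (fun v ↦ ψ (L * (u - u') * (List.ofFn v).prod).trace) v‖ ^ 2 ^ n :=
          (pow_expect_le_expect_pow (fun _ ↦ expect_nonneg fun _ _ ↦ norm_nonneg _) _).trans
            (expect_le_expect fun _ _ ↦ pow_expect_le_expect_pow (fun _ ↦ norm_nonneg _) _)
      _ ≤ 𝔼 u, 𝔼 u', zeroProb n (L * (u - u')) :=
          expect_le_expect fun u _ ↦ expect_le_expect fun u' _ ↦ ih (hR u u') _
      _ = 𝔼 _u : Matrix ι ι F, 𝔼 w, zeroProb n (L * w) :=
          expect_congr rfl fun u _ ↦ Fintype.expect_equiv (Equiv.subLeft u) _ _ fun _ ↦ rfl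
      _ = zeroProb (n + 1) L := by rw [Fintype.expect_const, zeroProb_succ]

lemma multiDisc_trace_pow_le (n : ℕ) :
    multiDisc (n + 1) (Matrix ι ι F) F (fun x ↦ (List.ofFn x).prod.trace) ^ 2 ^ n ≤
      zeroProb n (1 : Matrix ι ι F) := by
  set δ := zeroProb n (1 : Matrix ι ι F) ^ ((2 ^ n : ℕ) : ℝ)⁻¹
  have δ_nonneg : 0 ≤ δ := Real.rpow_nonneg (zeroProb_nonneg n 1) _
  have δ_pow : δ ^ 2 ^ n = zeroProb n (1 : Matrix ι ι F) :=
    Real.rpow_inv_natCast_pow (zeroProb_nonneg n 1) (by positivity)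
  rw [← δ_pow]
  refine pow_le_pow_left₀ (multiDisc_nonneg _) (multiDisc_le δ_nonneg fun S y hS ↦ ?_) _
  refine discVal_le_of_forall_addChar δ_nonneg fun ψ hψ ↦ ?_
  refine le_of_pow_le_pow_left₀ (by positivity) δ_nonneg (n := 2 ^ n) ?_
  simpa only [δ_pow, one_mul] using norm_expect_indicator_addChar_trace_pow_le hψ hS 1

lemma zeroProb_le {n s : ℕ} {L : Matrix ι ι F} (hL : n * s < L.rank) :
    zeroProb n L ≤ n / (Fintype.card F : ℝ) ^ (s * (s + 1)) := by
  induction n generalizing L with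
  | zero =>
    have L_ne_zero : L ≠ 0 := by
      rintro rfl
      simp at hL
    simp [zeroProb_zero, L_ne_zero]
  | succ n ih =>
    have zeroProb_mul_le (u : Matrix ι ι F) : zeroProb n (L * u) ≤
        n / (Fintype.card F : ℝ) ^ (s * (s + 1)) +
          if u.rank + s < Fintype.card ι then 1 else 0 := by
      split_ifs with hu
      · exact (zeroProb_le_one n _).trans (le_add_of_nonneg_left (by positivity))
      · have rank_le := rank_add_rank_le_rank_mul_add_card L u
        rw [add_zero]
        exact ih (by lia)
    calc zeroProb (n + 1) L
        ≤ 𝔼 u : Matrix ι ι F, (n / (Fintype.card F : ℝ) ^ (s * (s + 1)) +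
            if u.rank + s < Fintype.card ι then 1 else 0) := by
          rw [zeroProb_succ]
          exact expect_le_expect fun u _ ↦ zeroProb_mul_le u
      _ ≤ n / (Fintype.card F : ℝ) ^ (s * (s + 1)) +
            ((Fintype.card F : ℝ) ^ (s * (s + 1)))⁻¹ := by
          rw [expect_add_distrib, Fintype.expect_const]
          gcongr
          exact expect_rank_add_lt_le s
      _ = (n + 1 : ℕ) / (Fintype.card F : ℝ) ^ (s * (s + 1)) := by
          push_cast
          ring

lemma zeroProb_one_le_inv_two_pow {n : ℕ}
    (hι : 2 * ((n + 2 : ℕ) * √((n + 2 : ℕ) * 2 ^ (n + 2) *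
      ((Fintype.card F : ℝ) / Real.logb 2 (Fintype.card F)))) ≤ Fintype.card ι) :
    zeroProb n (1 : Matrix ι ι F) ≤ ((2 : ℝ) ^ (5 * Fintype.card F))⁻¹ ^ 2 ^ n := by
  set q := Fintype.card F
  have one_lt_q : (1 : ℝ) < q := mod_cast Fintype.one_lt_card
  set m : ℝ := (n + 2 : ℕ) * 2 ^ (n + 2) * q
  have q_le_m : (q : ℝ) ≤ m :=
    le_mul_of_one_le_left q.cast_nonneg (mod_cast Nat.one_le_iff_ne_zero.2 (by positivity))
  have logb_le_q : Real.logb 2 q ≤ q := by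
    rw [Real.logb_le_iff_le_rpow one_lt_two (by linarith), Real.rpow_natCast]
    exact_mod_cast Nat.lt_two_pow_self.le
  have logb_pos : 0 < Real.logb 2 q := Real.logb_pos one_lt_two one_lt_q
  rw [← mul_div_assoc, mul_left_comm] at hι
  set ρ := √(m / Real.logb 2 q)
  have one_le_ρ : 1 ≤ ρ := Real.one_le_sqrt.2 ((one_le_div logb_pos).2 (logb_le_q.trans q_le_m))
  set s := ⌊2 * ρ⌋₊ with hs
  have s_pos : 0 < s := Nat.floor_pos.2 (by linarith)
  have rank_lt : n * s < (1 : Matrix ι ι F).rank := by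
    rw [Matrix.rank_one]
    have mul_s_le : (n + 2) * s ≤ Fintype.card ι := by
      have : ((n + 2 : ℕ) : ℝ) * s ≤ Fintype.card ι :=
        (mul_le_mul_of_nonneg_left (Nat.floor_le (by positivity)) (Nat.cast_nonneg _)).trans hι
      exact_mod_cast this
    nlinarith
  refine (zeroProb_le rank_lt).trans ?_
  rw [inv_pow, ← one_div, div_le_div_iff₀ (by positivity) (by positivity), one_mul]
  exact (natCast_mul_two_pow_le n Fintype.card_pos).trans
    (two_rpow_two_mul_le_pow one_lt_q (logb_le_q.trans q_le_m) hs)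

end Trace

lemma multiDisc_trace_le_inv_two_pow {ι F : Type} [Fintype ι] [DecidableEq ι] [Field F]
    [Fintype F] {k : ℕ} (hk : 2 ≤ k)
    (hι : 2 * (k * √(k * 2 ^ k * ((Fintype.card F : ℝ) / Real.logb 2 (Fintype.card F)))) ≤
      Fintype.card ι) :
    multiDisc (k - 1) (Matrix ι ι F) F (fun x ↦ (List.ofFn x).prod.trace) ≤
      ((2 : ℝ) ^ (5 * Fintype.card F))⁻¹ := by
  classical
  obtain ⟨n, rfl⟩ := Nat.exists_eq_add_of_le' hk
  exact le_of_pow_le_pow_left₀ (by positivity) (by positivity)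
    ((multiDisc_trace_pow_le n).trans (zeroProb_one_le_inv_two_pow hι))

section Transcript

variable {step : List Bool → Bool} {m : ℕ}

lemma length_buildTranscript : (buildTranscript step m).length = m := by
  induction m with
  | zero => rfl
  | succ m ih => rw [buildTranscript, List.length_append, ih, List.length_singleton]

lemma getElem?_buildTranscript {i : ℕ} (hi : i < m) :
    (buildTranscript step m)[i]? = some (step (buildTranscript step i)) := by
  induction m with
  | zero => exact absurd hi i.not_lt_zero
  | succ m ih =>
    rw [buildTranscript]
    obtain hlt | rfl := Nat.lt_succ_iff_lt_or_eq.1 hi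
    · rw [List.getElem?_append_left (by rwa [length_buildTranscript]), ih hlt]
    · rw [List.getElem?_append_right length_buildTranscript.le, length_buildTranscript,
        Nat.sub_self, List.getElem?_cons_zero]

lemma buildTranscript_length_eq_iff {t : List Bool} :
    buildTranscript step t.length = t ↔ ∀ s b, s ++ [b] <+: t → step s = b := by
  induction t using List.reverseRecOn with
  | nil => simp [buildTranscript]
  | append_singleton t b ih =>
    rw [List.length_append, List.length_singleton, buildTranscript]
    refine ⟨fun h ↦ ?_, fun h ↦ ?_⟩
    · obtain ⟨ht, hb⟩ := List.append_inj' h rfl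
      intro s c hs
      obtain hs | hs := List.prefix_concat_iff.1 hs
      · obtain ⟨rfl, hc⟩ := List.append_inj' hs rfl
        rw [ht] at hb
        simpa using hb.trans hc.symm
      · exact ih.1 ht s c hs
    · have ht := ih.2 fun s c hs ↦ h s c (hs.trans (List.prefix_append _ _))
      rw [ht, h t b List.prefix_rfl]

end Transcript

section Consistent

variable {k c : ℕ} {I Z : Type} {Vis : Fin k → I → I → Prop}

/-- On input `x`, every bit that player `i` has to write along the transcript `t` is the one
recorded in `t`. -/
def DProt.Consistent (P : DProt k I Vis Z c) (i : Fin k) (t : List Bool) (x : I) : Prop :=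
  ∀ s b, s ++ [b] <+: t → P.speaker s = i → P.msg s x = b

lemma DProt.consistent_congr (P : DProt k I Vis Z c) {i : Fin k} (t : List Bool) {x x' : I}
    (h : Vis i x x') : P.Consistent i t x ↔ P.Consistent i t x' :=
  forall₂_congr fun s b ↦ forall₂_congr fun _ hs ↦ by rw [P.msg_nof s x x' (hs ▸ h)]

lemma DProt.forall_consistent_iff (P : DProt k I Vis Z c) {t : List Bool} {x : I} :
    (∀ i, P.Consistent i t x) ↔ buildTranscript (fun s ↦ P.msg s x) t.length = t :=
  ⟨fun h ↦ buildTranscript_length_eq_iff.2 fun s b hs ↦ h _ s b hs rfl,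
    fun h _ s b hs _ ↦ buildTranscript_length_eq_iff.1 h s b hs⟩

end Consistent

section Lift

variable {k c : ℕ} {W Y Z : Type}

-- The last player, who sees `x`, announces `A x` in unary; then player `0` compares it with `y`.
lemma exists_run_eq_decide [Finite Y] [DecidableEq Y] (hk : 2 ≤ k) (A : (Fin (k - 1) → W) → Y) :
    ∃ c, ∃ P : DProt k ((Fin (k - 1) → W) × Y) (liftVis k W Y) Bool c,
      ∀ z, P.run z = decide (A z.1 = z.2) := by
  obtain ⟨N, ⟨e⟩⟩ := Finite.exists_equiv_fin Y
  refine ⟨N + 1, {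
    speaker := fun t ↦ if t.length < N then ⟨k - 1, by lia⟩ else ⟨0, by lia⟩
    msg := fun t z ↦ if t.length < N then decide ((e (A z.1) : ℕ) = t.length) else
      decide (t[(e z.2 : ℕ)]? = some true)
    msg_nof := fun t z z' h ↦ ?_
    out := fun t ↦ decide (t[N]? = some true) }, fun z ↦ ?_⟩
  · split_ifs at h ⊢
    · rw [show z.1 = z'.1 from funext fun j ↦ h.1 j j.2.ne]
    · rw [h.2.resolve_left (by lia : 0 ≠ k - 1)]
  · have e_lt : (e z.2 : ℕ) < N := (e z.2).2
    simp only [DProt.run]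
    rw [getElem?_buildTranscript N.lt_succ_self]
    simp only [length_buildTranscript, lt_irrefl, if_false]
    rw [getElem?_buildTranscript e_lt]
    simp only [length_buildTranscript, e_lt, if_true, Option.some_inj, decide_eq_true_eq,
      Fin.val_inj, EmbeddingLike.apply_eq_iff_eq]

/-- The inputs `x` for which the first `k - 1` players, on input `(x, y)`, are consistent with the
transcript `t`. -/
def DProt.leafSlice (P : DProt k ((Fin (k - 1) → W) × Y) (liftVis k W Y) Z c) (t : List Bool)
    (y : Y) : Set (Fin (k - 1) → W) :=
  {x | ∀ i : Fin (k - 1), P.Consistent (i.castLE (Nat.sub_le k 1)) t (x, y)}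

variable (P : DProt k ((Fin (k - 1) → W) × Y) (liftVis k W Y) Z c)

lemma DProt.isCylinderIntersection_leafSlice (t : List Bool) (y : Y) :
    IsCylinderIntersection (k - 1) W (P.leafSlice t y) := by
  refine ⟨fun i ↦ {x | P.Consistent (i.castLE (Nat.sub_le k 1)) t (x, y)}, fun i x x' h ↦ ?_, ?_⟩
  · refine P.consistent_congr t ⟨fun j hj ↦ h j fun hji ↦ hj ?_, Or.inr rfl⟩
    rw [hji, Fin.val_castLE]
  · ext x
    simp only [DProt.leafSlice, Set.mem_iInter, Set.mem_ofPred_eq]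

-- Changing `y` leaves the view of the last player unchanged.
lemma DProt.forall_consistent_of_mem_leafSlice {t : List Bool} {x : Fin (k - 1) → W} {y y' : Y}
    (h : ∀ i, P.Consistent i t (x, y)) (hx : x ∈ P.leafSlice t y') (i : Fin k) :
    P.Consistent i t (x, y') := by
  by_cases hi : (i : ℕ) = k - 1
  · have vis : liftVis k W Y i (x, y) (x, y') := ⟨fun _ _ ↦ rfl, Or.inl hi⟩
    exact (P.consistent_congr t vis).1 (h i)
  · exact hx ⟨i, by lia⟩

variable {A : (Fin (k - 1) → W) → Y} [Fintype Y] [DecidableEq Y]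

/-- The part of `P.leafSlice t y` outside the slices of all other values. For `t` a leaf on which
a protocol for the graph of `A` accepts, it contains every `x` with `A x = y` that reaches `t`. -/
def DProt.exclusiveSlice (t : List Bool) (y : Y) : Set (Fin (k - 1) → W) :=
  P.leafSlice t y \ ⋃ y' ∈ univ.erase y, P.leafSlice t y'

lemma DProt.pairwise_disjoint_exclusiveSlice (t : List Bool) :
    Pairwise fun y y' ↦ Disjoint (P.exclusiveSlice t y) (P.exclusiveSlice t y') :=
  fun _ y' h ↦ Set.disjoint_left.2 fun _ hx hx' ↦
    hx.2 (Set.mem_biUnion (mem_erase.2 ⟨h.symm, mem_univ y'⟩) hx'.1)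

lemma DProt.discVal_exclusiveSlice_le [Finite W] (t : List Bool) (y : Y) :
    discVal (k - 1) W Y A (P.exclusiveSlice t y) y ≤
      2 ^ Fintype.card Y * multiDisc (k - 1) W Y A := by
  refine (discVal_sdiff_biUnion_le _ (P.isCylinderIntersection_leafSlice t) _
    (P.isCylinderIntersection_leafSlice t y)).trans ?_
  gcongr
  · exact multiDisc_nonneg A
  · exact one_le_two
  · exact card_le_univ _

lemma DProt.exists_mem_exclusiveSlice
    {P : DProt k ((Fin (k - 1) → W) × Y) (liftVis k W Y) Bool c}
    (hP : ∀ z, P.run z = decide (A z.1 = z.2)) (x : Fin (k - 1) → W) :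
    ∃ t : List.Vector Bool c, x ∈ P.exclusiveSlice t.1 (A x) := by
  let t := buildTranscript (fun s ↦ P.msg s (x, A x)) c
  have length_t : t.length = c := length_buildTranscript
  have consistent : ∀ i, P.Consistent i t (x, A x) := by
    rw [P.forall_consistent_iff, length_t]
  refine ⟨⟨t, length_t⟩, fun _ ↦ consistent _, ?_⟩
  simp only [Set.mem_iUnion, mem_erase, mem_univ, and_true, not_exists]
  intro y hy hx
  have same_transcript := P.forall_consistent_iff.1
    (P.forall_consistent_of_mem_leafSlice consistent hx)
  rw [length_t] at same_transcript
  have run_eq : P.run (x, y) = P.run (x, A x) := congrArg P.out same_transcript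
  rw [hP, hP, decide_eq_decide] at run_eq
  exact hy (run_eq.2 rfl).symm

lemma card_le_of_run_eq_decide [Finite W] [Nonempty W]
    {P : DProt k ((Fin (k - 1) → W) × Y) (liftVis k W Y) Bool c}
    (hP : ∀ z, P.run z = decide (A z.1 = z.2)) :
    (Fintype.card Y : ℝ) ≤ 2 ^ c * (1 + Fintype.card Y ^ 2 *
      (2 ^ Fintype.card Y * multiDisc (k - 1) W Y A)) := by
  simpa using card_le_of_forall_discVal_le
    (fun t : List.Vector Bool c ↦ P.pairwise_disjoint_exclusiveSlice t.1)
    (DProt.exists_mem_exclusiveSlice hP) fun t y ↦ P.discVal_exclusiveSlice_le t.1 y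

lemma card_le_two_pow_dcc [Finite W] [Nonempty W] (hk : 2 ≤ k)
    (hdisc : (Fintype.card Y : ℝ) ^ 3 * 2 ^ Fintype.card Y * multiDisc (k - 1) W Y A < 1) :
    Fintype.card Y ≤ 2 ^ DCC (liftVis k W Y) (fun z ↦ decide (A z.1 = z.2)) Set.univ := by
  have exists_protocol : {c | ∃ P : DProt k ((Fin (k - 1) → W) × Y) (liftVis k W Y) Bool c,
      ∀ z ∈ Set.univ, P.run z = decide (A z.1 = z.2)}.Nonempty := by
    obtain ⟨c, P, hP⟩ := exists_run_eq_decide hk A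
    exact ⟨c, P, fun z _ ↦ hP z⟩
  obtain ⟨P, hP⟩ := Nat.sInf_mem exists_protocol
  have card_le := card_le_of_run_eq_decide fun z ↦ hP z trivial
  set D := DCC (liftVis k W Y) (fun z ↦ decide (A z.1 = z.2)) Set.univ
  set N := Fintype.card Y
  by_contra! hlt
  have error_lt : (2 : ℝ) ^ D * (N ^ 2 * (2 ^ N * multiDisc (k - 1) W Y A)) < 1 := by
    refine lt_of_le_of_lt ?_ hdisc
    have := multiDisc_nonneg A
    calc (2 : ℝ) ^ D * (N ^ 2 * (2 ^ N * multiDisc (k - 1) W Y A))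
        ≤ N * (N ^ 2 * (2 ^ N * multiDisc (k - 1) W Y A)) := by
          gcongr
          exact_mod_cast hlt.le
      _ = N ^ 3 * 2 ^ N * multiDisc (k - 1) W Y A := by ring
  have succ_le : (2 : ℝ) ^ D + 1 ≤ N := mod_cast hlt
  have card_le' : (N : ℝ) ≤ 2 ^ D + 2 ^ D * (N ^ 2 * (2 ^ N * multiDisc (k - 1) W Y A)) := by
    rw [← mul_one_add]
    exact card_le
  linarith

end Lift

end

/-- There is a constant `c > 0` such that for every finite field `F`
(i.e. every prime power `N = |F| ≥ 2`) and every integer `k ≥ 2`, setting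
`d = ⌈c · k^{3/2} · 2^{k/2} · √(N / log₂ N)⌉`, letting
`A = T_{N,d,k} : M_d^{k-1} → F` be the trace function on `k - 1` matrix arguments and
`f = Lift(A)` the associated graph function, one has `D_k(f) ≥ log₂ N`. -/
theorem explicit_graph_fn_lower_bound :
    ∃ c : ℝ, 0 < c ∧
      ∀ (F : Type) [Field F] [Fintype F] [DecidableEq F] (k : ℕ), 2 ≤ k →
        ∀ d : ℕ,
          d = ⌈c * (k : ℝ) ^ ((3 : ℝ) / 2) * 2 ^ ((k : ℝ) / 2) *
              Real.sqrt ((Fintype.card F : ℝ) / Real.logb 2 (Fintype.card F))⌉₊ →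
          (DCC (liftVis k (Matrix (Fin d) (Fin d) F) F)
              (fun z => decide (Matrix.trace (List.ofFn z.1).prod = z.2))
              Set.univ : ℝ) ≥
            Real.logb 2 (Fintype.card F) := by
  refine ⟨2, two_pos, fun F _ _ _ k hk d hd ↦ ?_⟩
  set A : (Fin (k - 1) → Matrix (Fin d) (Fin d) F) → F := fun x ↦ (List.ofFn x).prod.trace
  have le_d : 2 * (k * √(k * 2 ^ k * ((Fintype.card F : ℝ) / Real.logb 2 (Fintype.card F)))) ≤
      Fintype.card (Fin d) := by
    rw [Fintype.card_fin, hd, ← natCast_rpow_mul_two_rpow_mul_sqrt, ← mul_assoc, ← mul_assoc]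
    exact Nat.le_ceil _
  have disc_lt : (Fintype.card F : ℝ) ^ 3 * 2 ^ Fintype.card F * multiDisc (k - 1) _ F A < 1 := by
    grw [multiDisc_trace_le_inv_two_pow hk le_d]
    exact pow_three_mul_two_pow_mul_inv_lt_one _
  have card_le := card_le_two_pow_dcc hk disc_lt
  rw [ge_iff_le, Real.logb_le_iff_le_rpow one_lt_two (mod_cast Fintype.card_pos),
    Real.rpow_natCast]
  exact_mod_cast card_le
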